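/- arXiv:1509.05149 — 2 statements merged into one kernel-verified Lean document; each statement's English description precedes it below -/
import Mathlib

section
/- Let β ∈ (0,1), let ψ : (0,1) → [0,∞) be measurable with ∫₀¹ ψ(a)(1−a)^β da = 1 and ψ(a) → ψ₁ ∈ (0,∞) as a → 1⁻, and let 0 ≤ t₁ ≤ t₂. Then lim_{n→∞} n^{β−2} ∫₀¹ ( Σ_{k=1}^{⌊nt₁⌋} Σ_{ℓ=1}^{⌊nt₂⌋} a^{|k−ℓ|} ) (1−a)^{β−1} ψ(a) da = ( ψ₁ Γ(β) / ((2−β)(1−β)) ) · ( t₁^{2−β} + t₂^{2−β} − (t₂ − t₁)^{2−β} ). -/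
/-!
Write `r j = ∫₀¹ a ^ j (1 - a) ^ (β - 1) ψ(a) da`. The integral in the theorem is the double sum of
`r |k - ℓ|`, so everything follows from the decay of `r`.

* `tendsto_moment`: `j ^ β * r j → ψ₁ Γ(β)`. For constant `ψ` this is Euler's limit formula, since
  `j ^ β B(j + 1, β)` is exactly the sequence `GammaSeq β j` (`tendsto_beta`). In general only a
  neighbourhood of `a = 1` matters, because the mass on `a ≤ 1 - δ` contributes
  `O((1 - δ) ^ j)`; near `1`, `ψ` is close to `ψ₁`.
* `tendsto_sum_div_rpow` (a Stolz–Cesàro argument), used twice, turns this into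
  `U m / m ^ (2 - β) → ψ₁ Γ(β) / ((1 - β) (2 - β))` for `U m = ∑_{k < m} ∑_{j ≤ k} r j`.
* `double_sum_eq`: for `N ≤ M` the double sum over `k ≤ N`, `ℓ ≤ M` equals
  `U N + U M - U (M - N) - N r 0`. Taking `N = ⌊n t₁⌋`, `M = ⌊n t₂⌋` and dividing by `n ^ (2 - β)`
  gives the three powers in the limit; the term `N r 0` is `O(n)`, hence negligible as `β < 1`.
-/

open Filter Topology MeasureTheory Set

/-- Summing the rows of a Toeplitz array: row `k` contributes `A k + A (M - k + 1) - r 0`, where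
`A m = ∑_{j < m} r j` (rows numbered from `1`). -/
theorem double_sum_eq (r : ℕ → ℝ) (N M : ℕ) (h : N ≤ M) :
    ∑ k ∈ Finset.Icc 1 N, ∑ l ∈ Finset.Icc 1 M, r ((k : ℤ) - l).natAbs =
      (∑ k ∈ Finset.range N, ∑ j ∈ Finset.range (k + 1), r j) +
      (∑ k ∈ Finset.range M, ∑ j ∈ Finset.range (k + 1), r j) -
      (∑ k ∈ Finset.range (M - N), ∑ j ∈ Finset.range (k + 1), r j) - N * r 0 := by
  have shift : ∀ (f : ℕ → ℝ) (m : ℕ),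
      ∑ k ∈ Finset.Icc 1 m, f k = ∑ k ∈ Finset.range m, f (1 + k) := by
    intro f m
    rw [← Finset.Ico_add_one_right_eq_Icc, Finset.sum_Ico_eq_sum_range]; simp
  simp only [shift]
  induction N with
  | zero => simp
  | succ N ih =>
    obtain ⟨q, rfl⟩ : ∃ q, M = (N + 1) + q := ⟨M - (N + 1), by omega⟩
    have row : ∑ l ∈ Finset.range (N + 1 + q), r (((1 + N : ℕ) : ℤ) - (1 + l : ℕ)).natAbs =
        (∑ j ∈ Finset.range (N + 1), r j) + (∑ j ∈ Finset.range (q + 1), r j) - r 0 := by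
      rw [Finset.sum_range_add, Finset.sum_range_succ' _ q, ← Finset.sum_range_reflect r (N + 1)]
      rw [add_sub_assoc, add_sub_cancel_right]
      congr 1
      · refine Finset.sum_congr rfl fun l hl => ?_
        have := Finset.mem_range.1 hl
        congr 1; omega
      · refine Finset.sum_congr rfl fun l hl => ?_
        congr 1; omega
    rw [Finset.sum_range_succ, ih (by omega), row]
    have e1 : N + 1 + q - N = q + 1 := by omega
    have e2 : N + 1 + q - (N + 1) = q := by omega
    rw [e1, e2, Finset.sum_range_succ (fun k => ∑ j ∈ Finset.range (k + 1), r j) N,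
      Finset.sum_range_succ (fun k => ∑ j ∈ Finset.range (k + 1), r j) q]
    push_cast; ring

/-- Stolz–Cesàro for powers: `f` is compared with the telescoping increments
`(j + 1) ^ p - j ^ p ~ p j ^ (p - 1)`. -/
theorem tendsto_sum_div_rpow (p L : ℝ) (hp : 0 < p) (f : ℕ → ℝ)
    (hf : Tendsto (fun j : ℕ => f j / (j : ℝ) ^ (p - 1)) atTop (𝓝 L)) :
    Tendsto (fun m : ℕ => (∑ j ∈ Finset.range m, f j) / (m : ℝ) ^ p) atTop (𝓝 (L / p)) := by
  set g : ℕ → ℝ := fun j => ((j + 1 : ℕ) : ℝ) ^ p - (j : ℝ) ^ p with hg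
  have hgpos : ∀ j, 0 < g j := fun j => by
    have := Real.rpow_lt_rpow (Nat.cast_nonneg j) (Nat.cast_lt (α := ℝ).2 (Nat.lt_succ_self j)) hp
    simp only [hg]; simpa using this
  have hsum : ∀ m, ∑ j ∈ Finset.range m, g j = (m : ℝ) ^ p := fun m => by
    rw [Finset.sum_range_sub (fun j : ℕ => (j : ℝ) ^ p)]; simp [hp.ne']
  have hglim : Tendsto (fun j : ℕ => g j / (j : ℝ) ^ (p - 1)) atTop (𝓝 p) := by
    have hd : HasDerivAt (fun x : ℝ => x ^ p) p 1 := by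
      simpa using Real.hasDerivAt_rpow_const (x := 1) (p := p) (Or.inl one_ne_zero)
    have h1 := hd.tendsto_slope_zero_right
    have h2 : Tendsto (fun j : ℕ => ((j : ℝ))⁻¹) atTop (𝓝[>] 0) :=
      tendsto_inv_atTop_nhdsGT_zero.comp tendsto_natCast_atTop_atTop
    refine (h1.comp h2).congr' ?_
    filter_upwards [eventually_gt_atTop 0] with j hj
    have hj' : (0 : ℝ) < j := by exact_mod_cast hj
    have e : (1 : ℝ) + (j : ℝ)⁻¹ = ((j + 1 : ℕ) : ℝ) / j := by push_cast; field_simp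
    simp only [Function.comp, smul_eq_mul, inv_inv, e, hg, Real.one_rpow]
    rw [Real.div_rpow (by positivity) hj'.le, Real.rpow_sub_one hj'.ne']
    have := (Real.rpow_pos_of_pos hj' p).ne'
    field_simp
  have hfg : Tendsto (fun j => f j / g j) atTop (𝓝 (L / p)) := by
    refine (hf.div hglim hp.ne').congr' ?_
    filter_upwards [eventually_gt_atTop 0] with j hj
    have hj' : (0 : ℝ) < j := by exact_mod_cast hj
    have := (Real.rpow_pos_of_pos hj' (p - 1)).ne'
    have := (hgpos j).ne'
    simp only [Pi.div_apply]
    field_simp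
  have ho : (fun j => f j - L / p * g j) =o[atTop] g := by
    rw [Asymptotics.isLittleO_iff_tendsto (fun j hj => absurd hj (hgpos j).ne')]
    have := hfg.sub_const (L / p)
    rw [sub_self] at this
    refine this.congr fun j => ?_
    have := (hgpos j).ne'
    field_simp
  have hinf : Tendsto (fun m : ℕ => (m : ℝ) ^ p) atTop atTop :=
    (tendsto_rpow_atTop hp).comp tendsto_natCast_atTop_atTop
  have ho2 := ho.sum_range (fun j => (hgpos j).le) (by simpa only [hsum] using hinf)
  simp only [Finset.sum_sub_distrib, ← Finset.mul_sum, hsum] at ho2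
  have := (ho2.tendsto_div_nhds_zero).add_const (L / p)
  rw [zero_add] at this
  refine this.congr' ?_
  filter_upwards [eventually_gt_atTop 0] with j hj
  have hj' : (0 : ℝ) < j := by exact_mod_cast hj
  have := (Real.rpow_pos_of_pos hj' p).ne'
  field_simp; ring

/-- A power asymptotic evaluated along `u n ~ t n`. If `t = 0`, `u n` need not tend to infinity, and
the boundedness of `U m / m ^ q` is used instead. -/
theorem tendsto_comp_div_rpow (q c t : ℝ) (hq : 0 < q) (ht : 0 ≤ t) (U : ℕ → ℝ)
    (hU0 : U 0 = 0) (hU : Tendsto (fun m : ℕ => U m / (m : ℝ) ^ q) atTop (𝓝 c)) (u : ℕ → ℕ)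
    (hu : Tendsto (fun n : ℕ => (u n : ℝ) / n) atTop (𝓝 t)) :
    Tendsto (fun n : ℕ => (n : ℝ) ^ (-q) * U (u n)) atTop (𝓝 (c * t ^ q)) := by
  have hpow : Tendsto (fun n : ℕ => ((u n : ℝ) / n) ^ q) atTop (𝓝 (t ^ q)) :=
    hu.rpow_const (Or.inr hq.le)
  have key : ∀ n : ℕ, (n : ℝ) ^ (-q) * U (u n) =
      (U (u n) / (u n : ℝ) ^ q) * ((u n : ℝ) / n) ^ q := by
    intro n
    rw [Real.div_rpow (Nat.cast_nonneg _) (Nat.cast_nonneg _), Real.rpow_neg (Nat.cast_nonneg _)]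
    rcases Nat.eq_zero_or_pos (u n) with h | h
    · simp [h, hU0]
    · have : (0 : ℝ) < u n := by exact_mod_cast h
      have := (Real.rpow_pos_of_pos this q).ne'
      field_simp
  simp only [key]
  rcases ht.eq_or_lt with h | h
  · subst h
    rw [Real.zero_rpow hq.ne'] at hpow ⊢
    rw [mul_zero]
    obtain ⟨B, hB⟩ := hU.norm.bddAbove_range
    refine hpow.zero_mul_isBoundedUnder_le ?_ |>.congr fun n => mul_comm _ _
    exact isBoundedUnder_of ⟨B, fun n => hB ⟨u n, rfl⟩⟩
  · refine Tendsto.mul (hU.comp ?_) hpow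
    have h3 : Tendsto (fun n : ℕ => (u n : ℝ)) atTop atTop := by
      refine (hu.pos_mul_atTop h tendsto_natCast_atTop_atTop).congr' ?_
      filter_upwards [eventually_gt_atTop 0] with j hj
      have hj' : (0 : ℝ) < j := by exact_mod_cast hj
      field_simp
    exact tendsto_natCast_atTop_iff.1 h3

theorem integrableOn_one_sub_rpow (β : ℝ) (hβ : 0 < β) :
    IntegrableOn (fun a : ℝ => (1 - a) ^ (β - 1)) (Ioo 0 1) := by
  have h := (intervalIntegral.intervalIntegrable_rpow' (a := 1) (b := 0) (r := β - 1)
    (by linarith)).comp_sub_left 1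
  simp only [sub_self, sub_zero] at h
  exact ((intervalIntegrable_iff_integrableOn_Ioc_of_le zero_le_one).1 h).mono_set Ioo_subset_Ioc_self

theorem integrableOn_pow_mul {f : ℝ → ℝ} (hf : IntegrableOn f (Ioo 0 1)) (j : ℕ) :
    IntegrableOn (fun a => a ^ j * f a) (Ioo 0 1) := by
  refine Integrable.mono hf ?_ ?_
  · exact (by fun_prop : Measurable fun a : ℝ => a ^ j).aestronglyMeasurable.mul
      hf.aestronglyMeasurable
  · filter_upwards [ae_restrict_mem measurableSet_Ioo] with a ha
    rw [norm_mul]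
    refine mul_le_of_le_one_left (norm_nonneg _) ?_
    rw [norm_pow, Real.norm_of_nonneg ha.1.le]
    exact pow_le_one₀ ha.1.le ha.2.le

/-- Euler's limit formula for `Γ`, read through the Beta integral. -/
theorem tendsto_beta (β : ℝ) (hβ : 0 < β) :
    Tendsto (fun j : ℕ => (j : ℝ) ^ β * ∫ a in Ioo (0 : ℝ) 1, a ^ j * (1 - a) ^ (β - 1)) atTop
      (𝓝 (Real.Gamma β)) := by
  have key : ∀ j : ℕ, Complex.GammaSeq β j =
      (((j : ℝ) ^ β * ∫ a in Ioo (0 : ℝ) 1, a ^ j * (1 - a) ^ (β - 1) : ℝ) : ℂ) := by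
    intro j
    rw [Complex.GammaSeq_eq_betaIntegral_of_re_pos (by simpa using hβ), Complex.ofReal_mul,
      Complex.ofReal_cpow (Nat.cast_nonneg j), Complex.ofReal_natCast, Complex.betaIntegral_symm,
      Complex.betaIntegral, intervalIntegral.integral_of_le zero_le_one,
      integral_Ioc_eq_integral_Ioo, ← integral_complex_ofReal]
    congr 1
    refine setIntegral_congr_fun measurableSet_Ioo fun a ha => ?_
    have h1 : (0 : ℝ) ≤ 1 - a := by linarith [ha.2]
    simp only [add_sub_cancel_right, Complex.cpow_natCast]
    rw [Complex.ofReal_mul, Complex.ofReal_cpow h1]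
    push_cast
    rfl
  have h := Complex.GammaSeq_tendsto_Gamma β
  rw [Complex.Gamma_ofReal] at h
  have h2 := (Complex.continuous_re.tendsto _).comp h
  refine h2.congr fun j => ?_
  simp only [Function.comp, key, Complex.ofReal_re]

/-- The factor `(1 - a) ^ (β - 1)` is integrable against `ψ`: away from `1` it is comparable with
`(1 - a) ^ β`, and near `1` the function `ψ` is bounded. -/
theorem integrableOn_weight (β : ℝ) (hβ : 0 < β) (ψ : ℝ → ℝ) (ψ₁ : ℝ)
    (hmeas : Measurable ψ) (hnonneg : ∀ a ∈ Ioo (0 : ℝ) 1, 0 ≤ ψ a)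
    (hint : IntegrableOn (fun a => ψ a * (1 - a) ^ β) (Ioo 0 1))
    (hlim : Tendsto ψ (𝓝[Ioo (0 : ℝ) 1] 1) (𝓝 ψ₁)) :
    IntegrableOn (fun a => (1 - a) ^ (β - 1) * ψ a) (Ioo 0 1) := by
  obtain ⟨δ, hδ, h⟩ := Metric.tendsto_nhdsWithin_nhds.1 hlim 1 one_pos
  refine Integrable.mono' ((hint.const_mul δ⁻¹).add
    ((integrableOn_one_sub_rpow β hβ).const_mul (|ψ₁| + 1))) ?_ ?_
  · exact Measurable.aestronglyMeasurable (by fun_prop)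
  · filter_upwards [ae_restrict_mem measurableSet_Ioo] with a ha
    have h1 : 0 < 1 - a := by linarith [ha.2]
    have hψ := hnonneg a ha
    have hw : 0 < (1 - a) ^ (β - 1) := Real.rpow_pos_of_pos h1 _
    have hw' : (1 - a) ^ β = (1 - a) ^ (β - 1) * (1 - a) := by
      rw [Real.rpow_sub_one h1.ne']; field_simp
    rw [Real.norm_of_nonneg (by positivity)]
    simp only [Pi.add_apply]
    rcases lt_or_ge (1 - a) δ with hc | hc
    · have h2 := h ha (by rw [Real.dist_eq, abs_sub_comm, abs_of_pos h1]; exact hc)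
      rw [Real.dist_eq] at h2
      have h3 : ψ a ≤ |ψ₁| + 1 := by linarith [(abs_lt.1 h2).2, le_abs_self ψ₁]
      have h4 : 0 ≤ δ⁻¹ * (ψ a * (1 - a) ^ β) := by positivity
      nlinarith
    · have h2 : 1 ≤ δ⁻¹ * (1 - a) := by
        rw [inv_mul_eq_div, le_div_iff₀ hδ]; linarith
      have h3 : 0 ≤ (|ψ₁| + 1) * (1 - a) ^ (β - 1) := by positivity
      have h4 : 0 ≤ (1 - a) ^ (β - 1) * ψ a := by positivity
      rw [hw']
      nlinarith

/-- Abelian asymptotics of the moments: only the behaviour of `ψ` at `1` matters. -/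
theorem tendsto_moment (β : ℝ) (hβ : β ∈ Ioo (0 : ℝ) 1) (ψ : ℝ → ℝ) (ψ₁ : ℝ)
    (hint : IntegrableOn (fun a => (1 - a) ^ (β - 1) * ψ a) (Ioo 0 1))
    (hlim : Tendsto ψ (𝓝[Ioo (0 : ℝ) 1] 1) (𝓝 ψ₁)) :
    Tendsto (fun j : ℕ => (j : ℝ) ^ β * ∫ a in Ioo (0 : ℝ) 1, a ^ j * ((1 - a) ^ (β - 1) * ψ a))
      atTop (𝓝 (ψ₁ * Real.Gamma β)) := by
  have hw := integrableOn_one_sub_rpow β hβ.1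
  set w : ℝ → ℝ := fun a => (1 - a) ^ (β - 1) with hwdef
  have hwnn : ∀ a ∈ Ioo (0 : ℝ) 1, 0 ≤ w a := fun a ha =>
    Real.rpow_nonneg (by linarith [ha.2]) _
  have hb := tendsto_beta β hβ.1
  have hdint : IntegrableOn (fun a => w a * ψ a - ψ₁ * w a) (Ioo 0 1) :=
    hint.sub (hw.const_mul ψ₁)
  set K := ∫ a in Ioo (0 : ℝ) 1, |w a * ψ a - ψ₁ * w a| with hK
  suffices hz : Tendsto (fun j : ℕ => (j : ℝ) ^ β *
      ∫ a in Ioo (0 : ℝ) 1, a ^ j * (w a * ψ a - ψ₁ * w a)) atTop (𝓝 0) by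
    have := hz.add (hb.const_mul ψ₁)
    rw [zero_add] at this
    refine this.congr fun j => ?_
    have e : ∫ a in Ioo (0 : ℝ) 1, a ^ j * (w a * ψ a - ψ₁ * w a) =
        (∫ a in Ioo (0 : ℝ) 1, a ^ j * (w a * ψ a)) - ψ₁ * ∫ a in Ioo (0 : ℝ) 1, a ^ j * w a := by
      rw [← integral_const_mul, ← integral_sub (integrableOn_pow_mul hint j)
        ((integrableOn_pow_mul hw j).const_mul ψ₁)]
      refine integral_congr_ae (Eventually.of_forall fun a => ?_)
      simp only []
      ring
    rw [e]; ring
  rw [Metric.tendsto_atTop']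
  intro η hη
  have hΓ := Real.Gamma_pos_of_pos hβ.1
  -- `ε` is chosen so that the part near `1`, asymptotically `ε * Γ(β)`, is below `η`.
  set ε := η / (2 * Real.Gamma β) with hε
  have hεpos : 0 < ε := by positivity
  obtain ⟨δ', hδ', h'⟩ := Metric.tendsto_nhdsWithin_nhds.1 hlim ε hεpos
  set δ := min δ' (1 / 2) with hδdef
  have hδ : 0 < δ := lt_min hδ' (by norm_num)
  have hδ1 : δ ≤ 1 / 2 := min_le_right _ _
  have hbound : ∀ j : ℕ, |∫ a in Ioo (0 : ℝ) 1, a ^ j * (w a * ψ a - ψ₁ * w a)| ≤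
      ε * (∫ a in Ioo (0 : ℝ) 1, a ^ j * w a) + (1 - δ) ^ j * K := by
    intro j
    rw [hK, ← integral_const_mul, ← integral_const_mul, ← integral_add
      ((integrableOn_pow_mul hw j).const_mul ε) (hdint.abs.const_mul _), ← Real.norm_eq_abs]
    refine norm_integral_le_of_norm_le (((integrableOn_pow_mul hw j).const_mul ε).add
      (hdint.abs.const_mul _)) ?_
    filter_upwards [ae_restrict_mem measurableSet_Ioo] with a ha
    have h0 := hwnn a ha
    have hp : 0 ≤ a ^ j := pow_nonneg ha.1.le j
    have hp' : 0 ≤ (1 - δ) ^ j := pow_nonneg (by linarith) j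
    rw [norm_mul, Real.norm_of_nonneg hp, Real.norm_eq_abs]
    rcases lt_or_ge (1 - a) δ with hc | hc
    · have h2 := h' ha (by
        rw [Real.dist_eq, abs_sub_comm, abs_of_pos (by linarith [ha.2])]
        exact hc.trans_le (min_le_left _ _))
      rw [Real.dist_eq] at h2
      have e : |w a * ψ a - ψ₁ * w a| = w a * |ψ a - ψ₁| := by
        rw [← abs_of_nonneg h0, ← abs_mul, abs_of_nonneg h0]; congr 1; ring
      have h3 : a ^ j * |w a * ψ a - ψ₁ * w a| ≤ ε * (a ^ j * w a) := by
        rw [e]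
        calc a ^ j * (w a * |ψ a - ψ₁|) ≤ a ^ j * (w a * ε) := by gcongr
          _ = _ := by ring
      have h4 : 0 ≤ (1 - δ) ^ j * |w a * ψ a - ψ₁ * w a| := by positivity
      linarith
    · have h3 : a ^ j * |w a * ψ a - ψ₁ * w a| ≤ (1 - δ) ^ j * |w a * ψ a - ψ₁ * w a| := by
        gcongr
        · exact ha.1.le
        · linarith
      have h4 : 0 ≤ ε * (a ^ j * w a) := by positivity
      linarith
  have hgeo : Tendsto (fun j : ℕ => (j : ℝ) ^ β * (1 - δ) ^ j) atTop (𝓝 0) := by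
    have h1 := tendsto_self_mul_const_pow_of_lt_one (r := 1 - δ) (by linarith) (by linarith)
    refine squeeze_zero' (Eventually.of_forall fun j => ?_) ?_ h1
    · have : 0 ≤ (1 - δ) ^ j := pow_nonneg (by linarith) j
      positivity
    · filter_upwards [eventually_ge_atTop 1] with j hj
      have : 0 ≤ (1 - δ) ^ j := pow_nonneg (by linarith) j
      gcongr
      have hj' : (1 : ℝ) ≤ j := by exact_mod_cast hj
      simpa using Real.rpow_le_rpow_of_exponent_le hj' hβ.2.le
  have hmaj := (hb.const_mul ε).add (hgeo.mul_const K)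
  have hlt : ε * Real.Gamma β + 0 * K < η := by
    rw [hε]; field_simp; linarith
  obtain ⟨J, hJ⟩ := eventually_atTop.1 (hmaj.eventually (gt_mem_nhds hlt))
  refine ⟨J, fun j hj => ?_⟩
  have h1 := hJ j hj.le
  rw [dist_zero_right, norm_mul, Real.norm_of_nonneg (by positivity), Real.norm_eq_abs]
  refine lt_of_le_of_lt (mul_le_mul_of_nonneg_left (hbound j) (by positivity)) ?_
  refine lt_of_eq_of_lt ?_ h1
  simp only [hwdef]
  ring

theorem stmt_12 (β : ℝ) (hβ : β ∈ Set.Ioo (0 : ℝ) 1) (ψ : ℝ → ℝ) (ψ₁ : ℝ) (hψ₁ : 0 < ψ₁)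
    (hmeas : Measurable ψ) (hnonneg : ∀ a ∈ Set.Ioo (0 : ℝ) 1, 0 ≤ ψ a)
    (hdens : ∫ a in Set.Ioo (0 : ℝ) 1, ψ a * (1 - a) ^ β = 1)
    (hlim : Filter.Tendsto ψ (nhdsWithin 1 (Set.Ioo (0 : ℝ) 1)) (nhds ψ₁))
    (t₁ t₂ : ℝ) (ht₁ : 0 ≤ t₁) (ht : t₁ ≤ t₂) :
    Filter.Tendsto
      (fun n : ℕ =>
        (n : ℝ) ^ (β - 2) *
          ∫ a in Set.Ioo (0 : ℝ) 1,
            (∑ k ∈ Finset.Icc 1 ⌊(n : ℝ) * t₁⌋₊, ∑ ℓ ∈ Finset.Icc 1 ⌊(n : ℝ) * t₂⌋₊,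
                a ^ ((k : ℤ) - ℓ).natAbs) *
              (1 - a) ^ (β - 1) * ψ a)
      Filter.atTop
      (nhds ((ψ₁ * Real.Gamma β / ((2 - β) * (1 - β))) *
        (t₁ ^ (2 - β) + t₂ ^ (2 - β) - (t₂ - t₁) ^ (2 - β)))) := by
  -- The integral in `hdens` is nonzero, hence not the junk value of a non-integrable function.
  have hint0 : IntegrableOn (fun a => ψ a * (1 - a) ^ β) (Ioo 0 1) := by
    by_contra hc
    rw [integral_undef hc] at hdens
    exact zero_ne_one hdens
  have hint := integrableOn_weight β hβ.1 ψ ψ₁ hmeas hnonneg hint0 hlim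
  have hb1 : 0 < 1 - β := by linarith [hβ.2]
  have hb2 : 0 < 2 - β := by linarith
  set r : ℕ → ℝ := fun j => ∫ a in Ioo (0 : ℝ) 1, a ^ j * ((1 - a) ^ (β - 1) * ψ a) with hr
  set U : ℕ → ℝ := fun m => ∑ k ∈ Finset.range m, ∑ j ∈ Finset.range (k + 1), r j with hU
  have hrlim : Tendsto (fun j : ℕ => r j / (j : ℝ) ^ ((1 - β) - 1)) atTop
      (𝓝 (ψ₁ * Real.Gamma β)) := by
    refine (tendsto_moment β hβ ψ ψ₁ hint hlim).congr fun j => ?_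
    rw [show 1 - β - 1 = -β by ring, Real.rpow_neg (Nat.cast_nonneg j), div_inv_eq_mul, mul_comm]
  have hA := tendsto_sum_div_rpow (1 - β) _ hb1 r hrlim
  have hA' : Tendsto (fun k : ℕ => (∑ j ∈ Finset.range (k + 1), r j) / (k : ℝ) ^ ((2 - β) - 1))
      atTop (𝓝 (ψ₁ * Real.Gamma β / (1 - β))) := by
    -- The extra term `r k` is negligible: `r k / k ^ (1 - β) = (r k / k ^ (-β)) / k`.
    have h1 := hA.add (hrlim.mul tendsto_inv_atTop_nhds_zero_nat)
    rw [mul_zero, add_zero] at h1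
    refine h1.congr' ?_
    filter_upwards [eventually_gt_atTop 0] with k hk
    have hk' : (0 : ℝ) < k := by exact_mod_cast hk
    rw [Finset.sum_range_succ, show 2 - β - 1 = 1 - β by ring, Real.rpow_sub_one hk'.ne']
    have := (Real.rpow_pos_of_pos hk' (1 - β)).ne'
    field_simp
  have hUlim := tendsto_sum_div_rpow (2 - β) _ hb2 _ hA'
  have hfl : ∀ t : ℝ, 0 ≤ t → Tendsto (fun n : ℕ => (⌊(n : ℝ) * t⌋₊ : ℝ) / n) atTop (𝓝 t) := by
    intro t h
    refine ((tendsto_nat_floor_mul_div_atTop h).comp tendsto_natCast_atTop_atTop).congr fun n => ?_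
    simp only [Function.comp, mul_comm]
  have hle : ∀ n : ℕ, ⌊(n : ℝ) * t₁⌋₊ ≤ ⌊(n : ℝ) * t₂⌋₊ := fun n =>
    Nat.floor_le_floor (by gcongr)
  have hfd : Tendsto (fun n : ℕ => ((⌊(n : ℝ) * t₂⌋₊ - ⌊(n : ℝ) * t₁⌋₊ : ℕ) : ℝ) / n) atTop
      (𝓝 (t₂ - t₁)) := by
    refine ((hfl t₂ (ht₁.trans ht)).sub (hfl t₁ ht₁)).congr fun n => ?_
    rw [Nat.cast_sub (hle n), sub_div]
  have hU0 : U 0 = 0 := by simp [hU]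
  have l1 := tendsto_comp_div_rpow _ _ _ hb2 ht₁ U hU0 hUlim _ (hfl t₁ ht₁)
  have l2 := tendsto_comp_div_rpow _ _ _ hb2 (ht₁.trans ht) U hU0 hUlim _ (hfl t₂ (ht₁.trans ht))
  have l3 := tendsto_comp_div_rpow _ _ _ hb2 (sub_nonneg.2 ht) U hU0 hUlim _ hfd
  have l4 : Tendsto (fun n : ℕ => (n : ℝ) ^ (-(2 - β)) * (⌊(n : ℝ) * t₁⌋₊ * r 0)) atTop (𝓝 0) := by
    have h1 : Tendsto (fun n : ℕ => (n : ℝ) ^ (-(1 - β))) atTop (𝓝 0) :=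
      (tendsto_rpow_neg_atTop hb1).comp tendsto_natCast_atTop_atTop
    have h2 := (h1.mul (hfl t₁ ht₁)).mul_const (r 0)
    rw [zero_mul, zero_mul] at h2
    refine h2.congr' ?_
    filter_upwards [eventually_gt_atTop 0] with n hn
    have hn' : (0 : ℝ) < n := by exact_mod_cast hn
    rw [show -(2 - β) = -(1 - β) - 1 by ring, Real.rpow_sub_one hn'.ne']
    field_simp
  have htot := ((l1.add l2).sub l3).sub l4
  convert htot.congr fun n => ?_ using 2
  · field_simp
    ring
  · have e : ∫ a in Ioo (0 : ℝ) 1,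
            (∑ k ∈ Finset.Icc 1 ⌊(n : ℝ) * t₁⌋₊, ∑ ℓ ∈ Finset.Icc 1 ⌊(n : ℝ) * t₂⌋₊,
                a ^ ((k : ℤ) - ℓ).natAbs) * (1 - a) ^ (β - 1) * ψ a =
        ∑ k ∈ Finset.Icc 1 ⌊(n : ℝ) * t₁⌋₊, ∑ ℓ ∈ Finset.Icc 1 ⌊(n : ℝ) * t₂⌋₊,
          r ((k : ℤ) - ℓ).natAbs := by
      simp only [mul_assoc, Finset.sum_mul, hr]
      rw [integral_finsetSum _ fun k _ => integrable_finsetSum _ fun l _ => integrableOn_pow_mul hint _]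
      refine Finset.sum_congr rfl fun k _ => ?_
      rw [integral_finsetSum _ fun l _ => integrableOn_pow_mul hint _]
    rw [e, double_sum_eq r _ _ (hle n), show β - 2 = -(2 - β) by ring]
    simp only [hU]
    ring
end

section
/- Let λ > 0, let ψ : (0,1) → [0,∞) be measurable with ∫₀¹ ψ(a) da = 1 and ψ(a) → ψ₁ ∈ (0,∞) as a → 1⁻, let m be a positive integer and θ₁, …, θ_m ∈ ℝ. For N ≥ 2 set γ_N := (N log N)^{−1/2} and, for a ∈ (0,1), B_N(a) := Σ_{k=1}^{m} ( e^{i γ_N θ_k} − 1 − i γ_N θ_k ) + Σ_{1≤ℓ<j≤m} a^{j−ℓ} ( e^{i γ_N θ_ℓ} − 1 ) e^{i γ_N (θ_{ℓ+1}+⋯+θ_{j−1})} ( e^{i γ_N θ_j} − 1 ). Then lim_{N→∞} N ∫₀¹ ( 1 − e^{(λ/(1−a)) B_N(a)} ) ψ(a) da = (λ ψ₁ / 2) ( θ₁ + ⋯ + θ_m )². -/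
/-!
Write `S = θ₁ + ⋯ + θ_m` and `c = γ_N²`, so that `N c = 1 / log N`.

At `a = 1` the double sum telescopes and `B_N(1) = e^{iγS} - 1 - iγS` (`expo_one`), a number of
nonpositive real part which is `-c S²/2 + o(c)` (`endExpo_taylor`). Since
`|B_N(a) - B_N(1)| ≤ C c (1 - a)` (`expo_lipschitz`), replacing `B_N(a)` by `B_N(1)` changes the
exponent by `O(c)` uniformly in `a`, hence the whole expression by `O(N c) = o(1)`.

For the remaining integrand `1 - exp (λ B_N(1) / (1 - a))`, the part `1 - a ≤ c` is bounded by `2`,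
and on `1 - a > c` it is linearised with an error `O(c² / (1 - a)²)` (`integrand_bound`). The kernels
`c⁻¹ 1_{1-a ≤ c}`, `c (1 - a)⁻² 1_{1-a > c}` and `(log c⁻¹)⁻¹ (1 - a)⁻¹ 1_{1-a > c}` are all
approximate identities at `a = 1`, so their integrals against `ψ` tend to `ψ₁`. The first two thus
contribute `O(N c) = o(1)`, and the third yields the leading term
`-λ (B_N(1) / c) · (N c log c⁻¹) · ψ₁ → λ S² ψ₁ / 2`, because `log c⁻¹ = log N + log log N`.
-/

open Filter Topology MeasureTheory Set

/-! ### The exponent and its value at the endpoint -/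

lemma prod_telescope (u : ℕ → ℂ) (m : ℕ) :
    1 + ∑ l ∈ Finset.Icc 1 m, (u l - 1) * ∏ r ∈ Finset.Ioo l (m + 1), u r =
      ∏ r ∈ Finset.Icc 1 m, u r := by
  induction m with
  | zero => simp
  | succ m ih =>
    rw [Finset.sum_Icc_succ_top (by omega), Finset.prod_Icc_succ_top (by omega), ← ih]
    have h : ∀ l ∈ Finset.Icc 1 m, (u l - 1) * ∏ r ∈ Finset.Ioo l (m + 1 + 1), u r =
        ((u l - 1) * ∏ r ∈ Finset.Ioo l (m + 1), u r) * u (m + 1) := by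
      intro l hl
      rw [Finset.mem_Icc] at hl
      have : Finset.Ioo l (m + 1 + 1) = insert (m + 1) (Finset.Ioo l (m + 1)) := by
        ext x; simp only [Finset.mem_Ioo, Finset.mem_insert]; omega
      rw [this, Finset.prod_insert (by simp)]; ring
    rw [Finset.sum_congr rfl h, ← Finset.sum_mul]
    have : Finset.Ioo (m + 1) (m + 1 + 1) = ∅ := by
      ext x; simp
    rw [this, Finset.prod_empty]; ring

/-- Expansion of `∏ u r - 1` by the smallest and the largest index at which the factor
`u r - 1` of `u r = 1 + (u r - 1)` is selected. -/
lemma double_telescope (u : ℕ → ℂ) (m : ℕ) :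
    ∑ k ∈ Finset.Icc 1 m, (u k - 1) + ∑ l ∈ Finset.Icc 1 m, ∑ j ∈ Finset.Icc (l + 1) m,
      (u l - 1) * (∏ r ∈ Finset.Ioo l j, u r) * (u j - 1) = ∏ r ∈ Finset.Icc 1 m, u r - 1 := by
  induction m with
  | zero => simp
  | succ m ih =>
    rw [Finset.sum_Icc_succ_top (by omega), Finset.prod_Icc_succ_top (by omega),
      Finset.sum_Icc_succ_top (by omega)]
    have h : ∀ l ∈ Finset.Icc 1 m, ∑ j ∈ Finset.Icc (l + 1) (m + 1),
        (u l - 1) * (∏ r ∈ Finset.Ioo l j, u r) * (u j - 1) =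
        ∑ j ∈ Finset.Icc (l + 1) m, (u l - 1) * (∏ r ∈ Finset.Ioo l j, u r) * (u j - 1) +
        (u l - 1) * (∏ r ∈ Finset.Ioo l (m + 1), u r) * (u (m + 1) - 1) := by
      intro l hl
      rw [Finset.mem_Icc] at hl
      rw [Finset.sum_Icc_succ_top (by omega)]
    rw [Finset.sum_congr rfl h, Finset.sum_add_distrib, ← Finset.sum_mul]
    have : Finset.Icc (m + 1 + 1) (m + 1) = ∅ := by simp
    rw [this, Finset.sum_empty]
    linear_combination ih + (u (m + 1) - 1) * prod_telescope u m

/-- The exponent `B_N(a)` as a function of the scale `g = γ_N`. -/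
noncomputable def expo (m : ℕ) (θ : ℕ → ℝ) (g a : ℝ) : ℂ :=
  (∑ k ∈ Finset.Icc 1 m,
      (Complex.exp (Complex.I * (g * θ k)) - 1 - Complex.I * (g * θ k))) +
    ∑ ℓ ∈ Finset.Icc 1 m, ∑ j ∈ Finset.Icc (ℓ + 1) m,
      (a : ℂ) ^ (j - ℓ) * (Complex.exp (Complex.I * (g * θ ℓ)) - 1) *
        Complex.exp (Complex.I * (g * ∑ r ∈ Finset.Ioo ℓ j, θ r)) *
        (Complex.exp (Complex.I * (g * θ j)) - 1)

/-- The value of the exponent at `a = 1`, for `S = θ₁ + ⋯ + θ_m`. -/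
noncomputable def endExpo (S g : ℝ) : ℂ :=
  Complex.exp (Complex.I * (g * S)) - 1 - Complex.I * (g * S)

lemma expo_one (m : ℕ) (θ : ℕ → ℝ) (g : ℝ) :
    expo m θ g 1 = endExpo (∑ k ∈ Finset.Icc 1 m, θ k) g := by
  have key := double_telescope (fun k => Complex.exp (Complex.I * (g * θ k))) m
  simp only [← Complex.exp_sum, ← Finset.mul_sum] at key
  unfold expo endExpo
  push_cast
  simp only [one_pow, one_mul]
  rw [Finset.sum_sub_distrib, ← Finset.mul_sum, ← Finset.mul_sum]
  linear_combination key

lemma norm_exp_I_sub_one (x y : ℝ) : ‖Complex.exp (Complex.I * (x * y)) - 1‖ ≤ |x| * |y| := by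
  have := Real.norm_exp_I_mul_ofReal_sub_one_le (x := x * y)
  rw [Real.norm_eq_abs, abs_mul] at this
  exact_mod_cast this

/-- Only the powers `a ^ (j - ℓ)` depend on `a`, and each comes with two factors of order `g`. -/
lemma expo_lipschitz (m : ℕ) (θ : ℕ → ℝ) : ∃ C : ℝ, 0 ≤ C ∧ ∀ g a : ℝ, a ∈ Ioo (0 : ℝ) 1 →
    ‖expo m θ g a - expo m θ g 1‖ ≤ C * g ^ 2 * (1 - a) := by
  refine ⟨∑ l ∈ Finset.Icc 1 m, ∑ j ∈ Finset.Icc (l + 1) m, ((j - l : ℕ) : ℝ) * |θ l| * |θ j|,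
    by positivity, fun g a ha => ?_⟩
  unfold expo
  rw [add_sub_add_left_eq_sub, ← Finset.sum_sub_distrib, Finset.sum_mul, Finset.sum_mul]
  refine (norm_sum_le _ _).trans (Finset.sum_le_sum fun l _ => ?_)
  rw [← Finset.sum_sub_distrib, Finset.sum_mul, Finset.sum_mul]
  refine (norm_sum_le _ _).trans (Finset.sum_le_sum fun j _ => ?_)
  have h1 := norm_exp_I_sub_one g (θ l)
  have h2 := norm_exp_I_sub_one g (θ j)
  have h3 : ‖Complex.exp (Complex.I * (g * ∑ r ∈ Finset.Ioo l j, θ r))‖ = 1 := by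
    have := Complex.norm_exp_I_mul_ofReal (g * ∑ r ∈ Finset.Ioo l j, θ r)
    exact_mod_cast this
  have h4 : ‖(a : ℂ) ^ (j - l) - 1‖ ≤ ((j - l : ℕ) : ℝ) * (1 - a) := by
    have e : ((a : ℂ) ^ (j - l) - 1) = ((a ^ (j - l) - 1 : ℝ) : ℂ) := by push_cast; ring
    rw [e, Complex.norm_real, Real.norm_eq_abs, abs_sub_comm, abs_of_nonneg
      (sub_nonneg.2 (pow_le_one₀ ha.1.le ha.2.le))]
    have := one_add_mul_le_pow (a := a - 1) (by linarith [ha.1]) (j - l)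
    rw [add_sub_cancel] at this
    linarith
  have e : ∀ p q x y z : ℂ, p * x * y * z - q * x * y * z = (p - q) * x * y * z := by
    intros; ring
  rw [e, norm_mul, norm_mul, norm_mul, h3, mul_one]
  rw [Complex.ofReal_one, one_pow]
  calc _ ≤ (((j - l : ℕ) : ℝ) * (1 - a)) * (|g| * |θ l|) * (|g| * |θ j|) := by
        have : 0 ≤ 1 - a := by linarith [ha.2]
        gcongr
    _ = _ := by rw [← sq_abs g]; ring

lemma endExpo_re (S g : ℝ) : (endExpo S g).re ≤ 0 := by
  have : (endExpo S g) = Complex.exp ((g * S : ℝ) * Complex.I) - 1 - (g * S : ℝ) * Complex.I := by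
    unfold endExpo; push_cast; ring_nf
  rw [this]
  simp only [Complex.sub_re, Complex.exp_ofReal_mul_I_re, Complex.one_re, Complex.re_ofReal_mul,
    Complex.I_re]
  linarith [Real.cos_le_one (g * S)]

lemma endExpo_taylor (S : ℝ) :
    Tendsto (fun g : ℝ => endExpo S g / (g : ℂ) ^ 2) (𝓝[≠] 0) (𝓝 (-(S : ℂ) ^ 2 / 2)) := by
  have hbig : ∀ᶠ g : ℝ in 𝓝[≠] 0, ‖endExpo S g / (g : ℂ) ^ 2 - (-(S : ℂ) ^ 2 / 2)‖ ≤
      |g| * |S| ^ 3 := by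
    have : ∀ᶠ g : ℝ in 𝓝[≠] 0, |g * S| < 1 := by
      apply eventually_nhdsWithin_of_eventually_nhds
      have : Tendsto (fun g : ℝ => |g * S|) (𝓝 0) (𝓝 |0 * S|) := by
        apply Continuous.tendsto; fun_prop
      apply this.eventually_lt_const; simp
    filter_upwards [this, self_mem_nhdsWithin] with g hg hg0
    have hg0 : (g : ℂ) ≠ 0 := by exact_mod_cast hg0
    have hn : ‖Complex.I * (g * S)‖ = |g| * |S| := by simp
    have := Complex.exp_bound (x := Complex.I * (g * S)) (by rw [hn, ← abs_mul]; exact hg.le)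
      (n := 3) (by norm_num)
    rw [hn] at this
    simp only [Finset.sum_range_succ, Finset.sum_range_zero] at this
    have e : endExpo S g / (g : ℂ) ^ 2 - (-(S : ℂ) ^ 2 / 2) =
      (Complex.exp (Complex.I * (g * S)) - (0 + (Complex.I * (g * S)) ^ 0 / (Nat.factorial 0 : ℂ) +
        (Complex.I * (g * S)) ^ 1 / (Nat.factorial 1 : ℂ) +
        (Complex.I * (g * S)) ^ 2 / (Nat.factorial 2 : ℂ))) / (g : ℂ) ^ 2 := by
      unfold endExpo
      simp only [Nat.factorial]
      field_simp
      push_cast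
      ring_nf
      simp only [Complex.I_sq]
      ring
    rw [e, norm_div, norm_pow, Complex.norm_real, Real.norm_eq_abs]
    have hp : 0 < |g| := abs_pos.2 (by exact_mod_cast hg0)
    rw [div_le_iff₀ (by positivity)]
    refine this.trans ?_
    norm_num [Nat.factorial]
    rw [← sq_abs g]
    have : 0 ≤ |g| ^ 3 * |S| ^ 3 := by positivity
    nlinarith
  rw [tendsto_iff_norm_sub_tendsto_zero]
  refine squeeze_zero' (Eventually.of_forall fun _ => norm_nonneg _) hbig ?_
  apply tendsto_nhdsWithin_of_tendsto_nhds
  have : Tendsto (fun g : ℝ => |g| * |S| ^ 3) (𝓝 0) (𝓝 (|0| * |S| ^ 3)) := by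
    apply Continuous.tendsto; fun_prop
  simpa using this

/-- A second-order remainder bound valid on the whole left half-plane, not only near `0`. -/
lemma norm_exp_rem {z : ℂ} (hz : z.re ≤ 0) : ‖1 - Complex.exp z + z‖ ≤ 3 * ‖z‖ ^ 2 := by
  rcases le_total ‖z‖ 1 with h | h
  · have := Complex.norm_exp_sub_one_sub_id_le h
    rw [show 1 - Complex.exp z + z = -(Complex.exp z - 1 - z) by ring, norm_neg]
    nlinarith [sq_nonneg ‖z‖]
  · have h1 : ‖Complex.exp z‖ ≤ 1 := by
      rw [Complex.norm_exp]; exact Real.exp_le_one_iff.2 hz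
    calc _ ≤ ‖(1 : ℂ)‖ + ‖Complex.exp z‖ + ‖z‖ :=
          (norm_add_le _ _).trans (by gcongr; exact norm_sub_le _ _)
      _ ≤ _ := by rw [norm_one]; nlinarith

/-! ### Approximate identities at the endpoint -/

/-- Nonnegative kernels on `(0,1)`, indexed by `c → 0+`, with mass tending to one and vanishing
uniformly away from `1`, integrate `ψ` to its limit at `1`. -/
lemma peak_tendsto {ψ : ℝ → ℝ} {ψ₁ : ℝ} (hint : IntegrableOn ψ (Ioo (0 : ℝ) 1))
    (hlim : Tendsto ψ (𝓝[Ioo (0 : ℝ) 1] 1) (𝓝 ψ₁)) (φ : ℝ → ℝ → ℝ)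
    (hpos : ∀ᶠ c in 𝓝[>] (0 : ℝ), ∀ a ∈ Ioo (0 : ℝ) 1, 0 ≤ φ c a)
    (hmeas : ∀ c, Measurable (φ c))
    (hone : Tendsto (fun c => ∫ a in Ioo (0 : ℝ) 1, φ c a) (𝓝[>] 0) (𝓝 1))
    (hunif : ∀ δ > 0, ∃ β : ℝ → ℝ, Tendsto β (𝓝[>] 0) (𝓝 0) ∧
      ∀ᶠ c in 𝓝[>] (0 : ℝ), ∀ a ∈ Ioo (0 : ℝ) 1, a ≤ 1 - δ → φ c a ≤ β c) :
    (∀ᶠ c in 𝓝[>] (0 : ℝ), IntegrableOn (fun a => φ c a * ψ a) (Ioo (0 : ℝ) 1)) ∧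
    Tendsto (fun c => ∫ a in Ioo (0 : ℝ) 1, φ c a * ψ a) (𝓝[>] 0) (𝓝 ψ₁) := by
  have hu : ∀ u : Set ℝ, IsOpen u → (1 : ℝ) ∈ u →
      TendstoUniformlyOn φ 0 (𝓝[>] (0 : ℝ)) (Ioo (0 : ℝ) 1 \ u) := by
    intro u hu h1
    obtain ⟨δ, hδ, hb⟩ := Metric.isOpen_iff.1 hu 1 h1
    obtain ⟨β, hβ, hle⟩ := hunif δ hδ
    rw [Metric.tendstoUniformlyOn_iff]
    intro ε hε
    filter_upwards [hpos, hle, hβ.eventually_lt_const hε] with c h0 h2 h3 a ha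
    have h4 : a ≤ 1 - δ := by
      by_contra h
      refine ha.2 (hb ?_)
      rw [Metric.mem_ball, Real.dist_eq, abs_lt]
      constructor <;> linarith [ha.1.2]
    rw [Pi.zero_apply, dist_zero_left, Real.norm_eq_abs, abs_of_nonneg (h0 a ha.1)]
    exact (h2 a ha.1 h4).trans_lt h3
  have hm : ∀ᶠ c in 𝓝[>] (0 : ℝ),
      AEStronglyMeasurable (φ c) (volume.restrict (Ioo (0 : ℝ) 1)) :=
    Eventually.of_forall fun c => (hmeas c).aestronglyMeasurable
  constructor
  · exact integrableOn_peak_smul_of_integrableOn_of_tendsto (g := ψ) measurableSet_Ioo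
      self_mem_nhdsWithin hu hone hm hint hlim
  · exact tendsto_setIntegral_peak_smul_of_integrableOn_of_tendsto (g := ψ)
      measurableSet_Ioo measurableSet_Ioo Subset.rfl self_mem_nhdsWithin (by simp) hpos hu hone hm
      hint hlim

lemma tendsto_log_inv : Tendsto (fun c : ℝ => Real.log c⁻¹) (𝓝[>] 0) atTop :=
  Real.tendsto_log_atTop.comp tendsto_inv_nhdsGT_zero

lemma eventually_Ioo_zero {δ : ℝ} (hδ : 0 < δ) : ∀ᶠ c in 𝓝[>] (0 : ℝ), c ∈ Ioo 0 δ :=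
  Ioo_mem_nhdsGT hδ

/-- The truncated kernel `1/(1-a)`, normalised to have mass one. -/
noncomputable def peakLog (c a : ℝ) : ℝ :=
  (Iio (1 - c)).indicator (fun a => (Real.log c⁻¹)⁻¹ * (1 - a)⁻¹) a

/-- The truncated kernel `1/(1-a)²`, normalised to have mass tending to one. -/
noncomputable def peakSq (c a : ℝ) : ℝ :=
  (Iio (1 - c)).indicator (fun a => c * ((1 - a) ^ 2)⁻¹) a

/-- The normalised indicator of the terminal interval of length `c`. -/
noncomputable def peakBox (c a : ℝ) : ℝ :=
  (Ici (1 - c)).indicator (fun _ => c⁻¹) a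

lemma setIntegral_truncated {c : ℝ} (hc : c ∈ Ioo (0 : ℝ) 1) (f F : ℝ → ℝ)
    (hF : ∀ a, a < 1 → HasDerivAt F (f a) a) (hf : ContinuousOn f (Iio 1)) :
    ∫ a in Ioo (0 : ℝ) 1, (Iio (1 - c)).indicator f a = F (1 - c) - F 0 := by
  rw [setIntegral_indicator measurableSet_Iio]
  have : Ioo (0 : ℝ) 1 ∩ Iio (1 - c) = Ioo 0 (1 - c) := by
    ext x; simp only [mem_inter_iff, mem_Ioo, mem_Iio]
    constructor
    · rintro ⟨⟨h1, h2⟩, h3⟩; exact ⟨h1, h3⟩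
    · rintro ⟨h1, h2⟩; exact ⟨⟨h1, by linarith [hc.1]⟩, h2⟩
  have hs : uIcc 0 (1 - c) ⊆ Iio 1 := by
    rw [uIcc_of_le (by linarith [hc.2])]
    intro x hx; exact lt_of_le_of_lt hx.2 (by linarith [hc.1])
  rw [this, ← integral_Ioc_eq_integral_Ioo,
    ← intervalIntegral.integral_of_le (by linarith [hc.2])]
  exact intervalIntegral.integral_eq_sub_of_hasDerivAt (fun x hx => hF x (hs hx))
    (hf.mono hs).intervalIntegrable

lemma peakLog_tendsto {ψ : ℝ → ℝ} {ψ₁ : ℝ} (hint : IntegrableOn ψ (Ioo (0 : ℝ) 1))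
    (hlim : Tendsto ψ (𝓝[Ioo (0 : ℝ) 1] 1) (𝓝 ψ₁)) :
    (∀ᶠ c in 𝓝[>] (0 : ℝ), IntegrableOn (fun a => peakLog c a * ψ a) (Ioo (0 : ℝ) 1)) ∧
    Tendsto (fun c => ∫ a in Ioo (0 : ℝ) 1, peakLog c a * ψ a) (𝓝[>] 0) (𝓝 ψ₁) := by
  have hinv : Tendsto (fun c : ℝ => (Real.log c⁻¹)⁻¹) (𝓝[>] 0) (𝓝 0) :=
    tendsto_inv_atTop_zero.comp tendsto_log_inv
  apply peak_tendsto hint hlim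
  · filter_upwards [tendsto_log_inv.eventually_ge_atTop 0] with c hc a ha
    have : 0 ≤ 1 - a := by linarith [ha.2]
    unfold peakLog
    rw [indicator_apply]
    split_ifs <;> positivity
  · intro c
    exact Measurable.indicator (by fun_prop) measurableSet_Iio
  · refine tendsto_const_nhds.congr' ?_
    filter_upwards [eventually_Ioo_zero one_pos, tendsto_log_inv.eventually_gt_atTop 0] with c hc hl
    unfold peakLog
    rw [setIntegral_truncated hc _ (fun a => (Real.log c⁻¹)⁻¹ * (-Real.log (1 - a)))]
    · simp only [sub_sub_cancel, sub_zero, ← Real.log_inv, inv_one]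
      rw [Real.log_one, mul_zero, sub_zero, inv_mul_cancel₀ hl.ne']
    · intro a ha
      have h : 1 - a ≠ 0 := by linarith
      convert! (((hasDerivAt_id a).const_sub 1).log h).neg.const_mul _ using 1
      simp only [id]
      field_simp
    · refine continuousOn_const.mul (ContinuousOn.inv₀ (by fun_prop) ?_)
      intro a ha; have : a < 1 := ha
      linarith
  · intro δ hδ
    refine ⟨fun c => (Real.log c⁻¹)⁻¹ * δ⁻¹, by simpa using hinv.mul_const δ⁻¹, ?_⟩
    filter_upwards [tendsto_log_inv.eventually_ge_atTop 0] with c hc a ha hle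
    have h1 : δ ≤ 1 - a := by linarith
    unfold peakLog
    rw [indicator_apply]
    split_ifs
    · gcongr
    · positivity

lemma peakSq_tendsto {ψ : ℝ → ℝ} {ψ₁ : ℝ} (hint : IntegrableOn ψ (Ioo (0 : ℝ) 1))
    (hlim : Tendsto ψ (𝓝[Ioo (0 : ℝ) 1] 1) (𝓝 ψ₁)) :
    (∀ᶠ c in 𝓝[>] (0 : ℝ), IntegrableOn (fun a => peakSq c a * ψ a) (Ioo (0 : ℝ) 1)) ∧
    Tendsto (fun c => ∫ a in Ioo (0 : ℝ) 1, peakSq c a * ψ a) (𝓝[>] 0) (𝓝 ψ₁) := by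
  have hid : Tendsto (fun c : ℝ => c) (𝓝[>] 0) (𝓝 0) :=
    tendsto_nhdsWithin_of_tendsto_nhds tendsto_id
  apply peak_tendsto hint hlim
  · filter_upwards [self_mem_nhdsWithin] with c hc a ha
    have hc : 0 < c := hc
    unfold peakSq
    rw [indicator_apply]
    split_ifs <;> positivity
  · intro c
    exact Measurable.indicator (by fun_prop) measurableSet_Iio
  · have : Tendsto (fun c : ℝ => 1 - c) (𝓝[>] 0) (𝓝 1) := by simpa using hid.const_sub 1
    refine this.congr' ?_
    filter_upwards [eventually_Ioo_zero one_pos] with c hc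
    have hc0 : c ≠ 0 := hc.1.ne'
    unfold peakSq
    rw [setIntegral_truncated hc _ (fun a => c * (1 - a)⁻¹)]
    · simp only [sub_sub_cancel, sub_zero]
      field_simp
    · intro a ha
      have h : 1 - a ≠ 0 := by linarith
      convert! (((hasDerivAt_id a).const_sub 1).inv h).const_mul c using 1
      simp only [id]
      field_simp
    · refine continuousOn_const.mul (ContinuousOn.inv₀ (by fun_prop) ?_)
      intro a ha
      have : a < 1 := ha
      have : 0 < 1 - a := by linarith
      positivity
  · intro δ hδ
    refine ⟨fun c => c * (δ ^ 2)⁻¹, by simpa using hid.mul_const (δ ^ 2)⁻¹, ?_⟩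
    filter_upwards [self_mem_nhdsWithin] with c hc a ha hle
    have hc : 0 < c := hc
    have h1 : δ ≤ 1 - a := by linarith
    unfold peakSq
    rw [indicator_apply]
    split_ifs
    · gcongr
    · positivity

lemma peakBox_tendsto {ψ : ℝ → ℝ} {ψ₁ : ℝ} (hint : IntegrableOn ψ (Ioo (0 : ℝ) 1))
    (hlim : Tendsto ψ (𝓝[Ioo (0 : ℝ) 1] 1) (𝓝 ψ₁)) :
    (∀ᶠ c in 𝓝[>] (0 : ℝ), IntegrableOn (fun a => peakBox c a * ψ a) (Ioo (0 : ℝ) 1)) ∧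
    Tendsto (fun c => ∫ a in Ioo (0 : ℝ) 1, peakBox c a * ψ a) (𝓝[>] 0) (𝓝 ψ₁) := by
  apply peak_tendsto hint hlim
  · filter_upwards [self_mem_nhdsWithin] with c hc a ha
    have hc : 0 < c := hc
    unfold peakBox
    rw [indicator_apply]
    split_ifs <;> positivity
  · intro c
    exact Measurable.indicator (by fun_prop) measurableSet_Ici
  · refine tendsto_const_nhds.congr' ?_
    filter_upwards [eventually_Ioo_zero one_pos] with c hc
    have hc0 : c ≠ 0 := hc.1.ne'
    unfold peakBox
    have : Ioo (0 : ℝ) 1 ∩ Ici (1 - c) = Ico (1 - c) 1 := by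
      ext x; simp only [mem_inter_iff, mem_Ioo, mem_Ici, mem_Ico]
      constructor
      · rintro ⟨⟨h1, h2⟩, h3⟩; exact ⟨h3, h2⟩
      · rintro ⟨h1, h2⟩; exact ⟨⟨by linarith [hc.2], h2⟩, h1⟩
    rw [setIntegral_indicator measurableSet_Ici, this, setIntegral_const, measureReal_def,
      Real.volume_Ico, sub_sub_cancel, ENNReal.toReal_ofReal hc.1.le, smul_eq_mul,
      mul_inv_cancel₀ hc0]
  · intro δ hδ
    refine ⟨fun _ => 0, tendsto_const_nhds, ?_⟩
    filter_upwards [eventually_Ioo_zero hδ] with c hc a ha hle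
    unfold peakBox
    rw [indicator_of_notMem]
    simp only [mem_Ici, not_le]
    linarith [hc.2]

/-! ### Linearisation of the integrand -/

/-- Comparison of the integrand with `-λ B_N(1) / (1 - a)` truncated to `1 - a > g²`; the factor
`log (g²)⁻¹` undoes the normalisation of `peakLog`. -/
lemma integrand_bound (m : ℕ) (θ : ℕ → ℝ) {lam : ℝ} (hlam : 0 < lam) :
    ∃ K : ℝ, ∀ᶠ g in 𝓝[>] (0 : ℝ), ∀ a ∈ Ioo (0 : ℝ) 1,
      ‖(1 - Complex.exp ((lam / (1 - a) : ℝ) * expo m θ g a)) -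
        (-(lam * endExpo (∑ k ∈ Finset.Icc 1 m, θ k) g * Real.log (g ^ 2)⁻¹)) *
          (peakLog (g ^ 2) a : ℂ)‖ ≤
      g ^ 2 * K * (1 + peakSq (g ^ 2) a + peakBox (g ^ 2) a) := by
  obtain ⟨C, hC, hlip⟩ := expo_lipschitz m θ
  set S := ∑ k ∈ Finset.Icc 1 m, θ k
  refine ⟨2 * lam * C + 3 * lam ^ 2 * S ^ 4 + 2, ?_⟩
  have hsmall : ∀ᶠ g in 𝓝[>] (0 : ℝ), |g * S| < 1 ∧ lam * C * g ^ 2 < 1 ∧ g ^ 2 < 1 := by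
    apply eventually_nhdsWithin_of_eventually_nhds
    have h1 : Tendsto (fun g : ℝ => |g * S|) (𝓝 0) (𝓝 |0 * S|) := by
      apply Continuous.tendsto; fun_prop
    have h2 : Tendsto (fun g : ℝ => lam * C * g ^ 2) (𝓝 0) (𝓝 (lam * C * 0 ^ 2)) := by
      apply Continuous.tendsto; fun_prop
    have h3 : Tendsto (fun g : ℝ => g ^ 2) (𝓝 0) (𝓝 (0 ^ 2)) := by
      apply Continuous.tendsto; fun_prop
    exact (h1.eventually_lt_const (by simp)).and
      ((h2.eventually_lt_const (by simp)).and (h3.eventually_lt_const (by simp)))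
  filter_upwards [hsmall, self_mem_nhdsWithin] with g hg hg0 a ha
  obtain ⟨hg1, hg2, hg3⟩ := hg
  have hg0 : 0 < g := hg0
  have hx : 0 < 1 - a := by linarith [ha.2]
  have hlog : Real.log (g ^ 2)⁻¹ ≠ 0 :=
    (Real.log_pos ((one_lt_inv₀ (by positivity)).2 hg3)).ne'
  have hq : 0 < lam / (1 - a) := by positivity
  set q := lam / (1 - a) with hqdef
  set b := endExpo S g with hb
  set z₀ : ℂ := (q : ℂ) * b with hz₀
  set R : ℂ := (q : ℂ) * (expo m θ g a - b) with hR
  have hbn : ‖b‖ ≤ g ^ 2 * S ^ 2 := by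
    have hn : ‖Complex.I * (g * S)‖ = |g * S| := by simp
    have := Complex.norm_exp_sub_one_sub_id_le (x := Complex.I * (g * S)) (by rw [hn]; exact hg1.le)
    rw [hn, sq_abs, mul_pow] at this
    exact this
  have hz₀re : z₀.re ≤ 0 := by
    rw [hz₀, Complex.re_ofReal_mul]
    exact mul_nonpos_of_nonneg_of_nonpos hq.le (endExpo_re S g)
  have hz₀exp : ‖Complex.exp z₀‖ ≤ 1 := by
    rw [Complex.norm_exp]; exact Real.exp_le_one_iff.2 hz₀re
  have hz₀n : ‖z₀‖ ≤ q * (g ^ 2 * S ^ 2) := by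
    rw [hz₀, norm_mul, Complex.norm_real, Real.norm_eq_abs, abs_of_pos hq]
    gcongr
  have hRn : ‖R‖ ≤ lam * C * g ^ 2 := by
    have h := hlip g a ha
    rw [expo_one] at h
    rw [hR, norm_mul, Complex.norm_real, Real.norm_eq_abs, abs_of_pos hq]
    calc _ ≤ q * (C * g ^ 2 * (1 - a)) := by gcongr
      _ = _ := by rw [hqdef]; field_simp
  have hsplit : (q : ℂ) * expo m θ g a = z₀ + R := by rw [hz₀, hR]; ring
  have hpert : ‖Complex.exp z₀ - Complex.exp (z₀ + R)‖ ≤ 2 * lam * C * g ^ 2 := by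
    rw [Complex.exp_add, show Complex.exp z₀ - Complex.exp z₀ * Complex.exp R =
      -(Complex.exp z₀ * (Complex.exp R - 1)) by ring, norm_neg, norm_mul]
    have := Complex.norm_exp_sub_one_le (hRn.trans hg2.le)
    calc _ ≤ 1 * (2 * ‖R‖) := by gcongr
      _ ≤ _ := by linarith
  rw [hsplit]
  have key : ∀ w : ℂ, ‖1 - Complex.exp (z₀ + R) - w‖ ≤
      2 * lam * C * g ^ 2 + ‖1 - Complex.exp z₀ - w‖ := by
    intro w
    rw [show 1 - Complex.exp (z₀ + R) - w =
      (Complex.exp z₀ - Complex.exp (z₀ + R)) + (1 - Complex.exp z₀ - w) by ring]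
    exact (norm_add_le _ _).trans (by gcongr)
  refine (key _).trans ?_
  rcases lt_or_ge a (1 - g ^ 2) with h | h
  -- Away from the endpoint the integrand is linearised; within `g²` of it, it is at most `2`.
  · have hmem : a ∈ Iio (1 - g ^ 2) := h
    have e1 : peakLog (g ^ 2) a = (Real.log (g ^ 2)⁻¹)⁻¹ * (1 - a)⁻¹ := indicator_of_mem hmem _
    have e2 : peakSq (g ^ 2) a = g ^ 2 * ((1 - a) ^ 2)⁻¹ := indicator_of_mem hmem _
    have e3 : peakBox (g ^ 2) a = 0 :=
      indicator_of_notMem (s := Ici (1 - g ^ 2)) (not_le.2 h) _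
    have hlogC : ((Real.log (g ^ 2)⁻¹ : ℝ) : ℂ) ≠ 0 := by exact_mod_cast hlog
    have e4 : 1 - Complex.exp z₀ - (-(lam * b * Real.log (g ^ 2)⁻¹)) * (peakLog (g ^ 2) a : ℂ) =
        1 - Complex.exp z₀ + z₀ := by
      rw [e1, hz₀, hqdef, Complex.ofReal_mul, Complex.ofReal_inv (Real.log _), Complex.ofReal_inv,
        Complex.ofReal_div]
      generalize ((Real.log (g ^ 2)⁻¹ : ℝ) : ℂ) = L at hlogC ⊢
      field_simp
      ring
    rw [e4, e2, e3]
    have h5 := norm_exp_rem hz₀re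
    have h6 : 3 * ‖z₀‖ ^ 2 ≤ 3 * (q * (g ^ 2 * S ^ 2)) ^ 2 := by gcongr
    have h7 : 3 * (q * (g ^ 2 * S ^ 2)) ^ 2 =
        g ^ 2 * (3 * lam ^ 2 * S ^ 4) * (g ^ 2 * ((1 - a) ^ 2)⁻¹) := by
      rw [hqdef]; field_simp
    set p := g ^ 2 * ((1 - a) ^ 2)⁻¹ with hp
    have hp0 : 0 ≤ p := by positivity
    have h8 : 0 ≤ g ^ 2 * (2 * lam * C + 2) * p := by positivity
    have h9 : 0 ≤ g ^ 2 * (3 * lam ^ 2 * S ^ 4 + 2) := by positivity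
    linarith
  · have e1 : peakLog (g ^ 2) a = 0 := indicator_of_notMem (by simpa using h) _
    have e2 : peakSq (g ^ 2) a = 0 := indicator_of_notMem (by simpa using h) _
    have e3 : peakBox (g ^ 2) a = (g ^ 2)⁻¹ := indicator_of_mem h _
    rw [e1, e2, e3, Complex.ofReal_zero, mul_zero, sub_zero]
    have h5 : ‖1 - Complex.exp z₀‖ ≤ 2 := by
      refine (norm_sub_le _ _).trans ?_
      rw [norm_one]; linarith
    have h6 : g ^ 2 * (2 * lam * C + 3 * lam ^ 2 * S ^ 4 + 2) * (1 + 0 + (g ^ 2)⁻¹) =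
        (g ^ 2 + 1) * (2 * lam * C + 3 * lam ^ 2 * S ^ 4 + 2) := by
      field_simp
      ring
    rw [h6]
    have h7 : 0 ≤ g ^ 2 * (3 * lam ^ 2 * S ^ 4 + 2) := by positivity
    have h8 : 0 ≤ 2 * lam * C + 3 * lam ^ 2 * S ^ 4 := by positivity
    linarith

/-! ### The scale `(N log N)^{-1/2}` and the limit -/

lemma scale_tendsto : Tendsto (fun N : ℕ => ((N : ℝ) * Real.log N) ^ (-(1 / 2) : ℝ)) atTop
    (𝓝[>] 0) := by
  have hN : Tendsto (fun N : ℕ => (N : ℝ)) atTop atTop := tendsto_natCast_atTop_atTop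
  have hNL : Tendsto (fun N : ℕ => (N : ℝ) * Real.log N) atTop atTop :=
    hN.atTop_mul_atTop₀ (Real.tendsto_log_atTop.comp hN)
  refine tendsto_nhdsWithin_iff.2 ⟨(tendsto_rpow_neg_atTop (by norm_num)).comp hNL, ?_⟩
  filter_upwards [hNL.eventually_gt_atTop 0] with N h
  exact Real.rpow_pos_of_pos h _

lemma scale_sq {x : ℝ} (hx : 0 ≤ x) : (x ^ (-(1 / 2) : ℝ)) ^ 2 = x⁻¹ := by
  rw [← Real.rpow_natCast, ← Real.rpow_mul hx]
  norm_num [Real.rpow_neg_one]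

lemma log_ratio_tendsto : Tendsto (fun N : ℕ => (Real.log N)⁻¹ * Real.log ((N : ℝ) * Real.log N))
    atTop (𝓝 1) := by
  have hL : Tendsto (fun N : ℕ => Real.log (N : ℝ)) atTop atTop :=
    Real.tendsto_log_atTop.comp tendsto_natCast_atTop_atTop
  have h := (Real.isLittleO_log_id_atTop.tendsto_div_nhds_zero.comp hL).const_add 1
  rw [add_zero] at h
  refine h.congr' ?_
  filter_upwards [hL.eventually_gt_atTop 0, eventually_gt_atTop 0] with N h0 hN
  have hN : (N : ℝ) ≠ 0 := by positivity
  rw [Real.log_mul hN h0.ne']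
  simp only [Function.comp, id]
  field_simp

theorem stmt_14 (lam : ℝ) (hlam : 0 < lam)
    (ψ : ℝ → ℝ) (ψ₁ : ℝ) (hψ₁ : 0 < ψ₁)
    (hmeas : Measurable ψ) (hnonneg : ∀ a ∈ Set.Ioo (0 : ℝ) 1, 0 ≤ ψ a)
    (hdens : ∫ a in Set.Ioo (0 : ℝ) 1, ψ a = 1)
    (hlim : Filter.Tendsto ψ (nhdsWithin 1 (Set.Ioo (0 : ℝ) 1)) (nhds ψ₁))
    (m : ℕ) (hm : 1 ≤ m) (θ : ℕ → ℝ)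
    (γ : ℕ → ℝ) (hγ : ∀ N : ℕ, 2 ≤ N → γ N = ((N : ℝ) * Real.log N) ^ (-(1 / 2) : ℝ))
    (B : ℕ → ℝ → ℂ)
    (hB : ∀ N : ℕ, ∀ a : ℝ, B N a =
      (∑ k ∈ Finset.Icc 1 m,
          (Complex.exp (Complex.I * (γ N * θ k)) - 1 - Complex.I * (γ N * θ k))) +
        ∑ ℓ ∈ Finset.Icc 1 m, ∑ j ∈ Finset.Icc (ℓ + 1) m,
          (a : ℂ) ^ (j - ℓ) * (Complex.exp (Complex.I * (γ N * θ ℓ)) - 1) *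
            Complex.exp (Complex.I * (γ N * ∑ r ∈ Finset.Ioo ℓ j, θ r)) *
            (Complex.exp (Complex.I * (γ N * θ j)) - 1)) :
    Filter.Tendsto
      (fun N : ℕ =>
        (N : ℂ) *
          ∫ a in Set.Ioo (0 : ℝ) 1,
            (1 - Complex.exp ((lam / (1 - a) : ℝ) * B N a)) * ((ψ a : ℝ) : ℂ))
      Filter.atTop
      (nhds ((lam * ψ₁ / 2 * (∑ k ∈ Finset.Icc 1 m, θ k) ^ 2 : ℝ) : ℂ)) := by
  have hint : IntegrableOn ψ (Ioo (0 : ℝ) 1) := by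
    -- A nonintegrable function would have integral `0` by convention.
    refine .of_integral_ne_zero ?_
    rw [hdens]; exact one_ne_zero
  obtain ⟨K, hK⟩ := integrand_bound m θ hlam
  set S := ∑ k ∈ Finset.Icc 1 m, θ k with hS
  have hγ0 : Tendsto γ atTop (𝓝[>] 0) := by
    refine scale_tendsto.congr' ?_
    filter_upwards [eventually_ge_atTop 2] with N hN
    exact (hγ N hN).symm
  have hc0 : Tendsto (fun N => γ N ^ 2) atTop (𝓝[>] 0) := by
    rw [tendsto_nhdsWithin_iff] at hγ0 ⊢
    refine ⟨by simpa using hγ0.1.pow 2, ?_⟩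
    filter_upwards [hγ0.2] with N hN
    have hN : 0 < γ N := hN
    exact pow_pos hN 2
  have hsq : ∀ N : ℕ, 2 ≤ N → γ N ^ 2 = ((N : ℝ) * Real.log N)⁻¹ := by
    intro N hN
    rw [hγ N hN, scale_sq (mul_nonneg (Nat.cast_nonneg _) (Real.log_natCast_nonneg _))]
  have hNc : ∀ N : ℕ, 2 ≤ N → (N : ℝ) * γ N ^ 2 = (Real.log N)⁻¹ := by
    intro N hN
    have : (N : ℝ) ≠ 0 := by positivity
    rw [hsq N hN, mul_inv, mul_inv_cancel_left₀ this]
  have hNc0 : Tendsto (fun N : ℕ => (N : ℝ) * γ N ^ 2) atTop (𝓝 0) := by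
    have : Tendsto (fun N : ℕ => (Real.log N)⁻¹) atTop (𝓝 0) :=
      tendsto_inv_atTop_zero.comp (Real.tendsto_log_atTop.comp tendsto_natCast_atTop_atTop)
    refine this.congr' ?_
    filter_upwards [eventually_ge_atTop 2] with N hN
    exact (hNc N hN).symm
  have hNclog : Tendsto (fun N : ℕ => (N : ℝ) * γ N ^ 2 * Real.log (γ N ^ 2)⁻¹) atTop (𝓝 1) := by
    refine log_ratio_tendsto.congr' ?_
    filter_upwards [eventually_ge_atTop 2] with N hN
    rw [hNc N hN, hsq N hN, inv_inv]
  obtain ⟨hi1, hl1⟩ := peakLog_tendsto hint hlim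
  obtain ⟨hi2, hl2⟩ := peakSq_tendsto hint hlim
  obtain ⟨hi3, hl3⟩ := peakBox_tendsto hint hlim
  -- The coefficient multiplying the normalised kernel `peakLog` in the linearised integrand.
  let A : ℕ → ℂ := fun N => -(lam * endExpo S (γ N) * Real.log (γ N ^ 2)⁻¹)
  have hmain : Tendsto (fun N : ℕ => (N : ℂ) * (A N *
      ((∫ a in Ioo (0 : ℝ) 1, peakLog (γ N ^ 2) a * ψ a : ℝ) : ℂ))) atTop
      (𝓝 ((lam * ψ₁ / 2 * S ^ 2 : ℝ) : ℂ)) := by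
    have t1 := (endExpo_taylor S).comp (hγ0.mono_right
      (nhdsWithin_mono 0 (fun x (hx : 0 < x) => hx.ne')))
    have t2 := (Complex.continuous_ofReal.tendsto _).comp hNclog
    have t3 := (Complex.continuous_ofReal.tendsto _).comp (hl1.comp hc0)
    have t := ((t1.const_mul (-(lam : ℂ))).mul t2).mul t3
    have e : -(lam : ℂ) * (-(S : ℂ) ^ 2 / 2) * ((1 : ℝ) : ℂ) * (ψ₁ : ℂ) =
        ((lam * ψ₁ / 2 * S ^ 2 : ℝ) : ℂ) := by push_cast; ring
    rw [e] at t
    refine t.congr' ?_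
    filter_upwards [(tendsto_nhdsWithin_iff.1 hγ0).2] with N hN
    have hN : (γ N : ℂ) ≠ 0 := by exact_mod_cast (show (0 : ℝ) < γ N from hN).ne'
    simp only [Function.comp, A]
    push_cast
    field_simp
  have herr : Tendsto (fun N : ℕ => (N : ℝ) * γ N ^ 2 * (K * (1 +
      (∫ a in Ioo (0 : ℝ) 1, peakSq (γ N ^ 2) a * ψ a) +
      (∫ a in Ioo (0 : ℝ) 1, peakBox (γ N ^ 2) a * ψ a)))) atTop (𝓝 0) := by
    have := hNc0.mul ((((hl2.comp hc0).const_add 1).add (hl3.comp hc0)).const_mul K)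
    rw [zero_mul] at this
    exact this
  refine tendsto_of_tendsto_of_dist hmain ?_
  refine squeeze_zero' (Eventually.of_forall fun _ => dist_nonneg) ?_ herr
  filter_upwards [hγ0.eventually hK, hc0.eventually hi1, hc0.eventually hi2,
    hc0.eventually hi3] with N hN h1 h2 h3
  have hBN : ∀ a, B N a = expo m θ (γ N) a := hB N
  simp only [hBN]
  have hI1 : IntegrableOn (fun a => A N * ((peakLog (γ N ^ 2) a * ψ a : ℝ) : ℂ)) (Ioo (0 : ℝ) 1) :=
    (h1.ofReal (𝕜 := ℂ)).const_mul (A N)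
  have hbd : IntegrableOn (fun a => γ N ^ 2 * K * (ψ a + peakSq (γ N ^ 2) a * ψ a +
      peakBox (γ N ^ 2) a * ψ a)) (Ioo (0 : ℝ) 1) := ((hint.add h2).add h3).const_mul _
  have hmeasF : Measurable (fun a : ℝ =>
      (1 - Complex.exp ((lam / (1 - a) : ℝ) * expo m θ (γ N) a)) * ((ψ a : ℝ) : ℂ)) := by
    have : Measurable (fun a : ℝ => expo m θ (γ N) a) := by
      apply Continuous.measurable
      unfold expo
      fun_prop
    fun_prop
  have hle : ∀ᵐ a ∂(volume.restrict (Ioo (0 : ℝ) 1)),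
      ‖(1 - Complex.exp ((lam / (1 - a) : ℝ) * expo m θ (γ N) a)) * ((ψ a : ℝ) : ℂ) -
        A N * ((peakLog (γ N ^ 2) a * ψ a : ℝ) : ℂ)‖ ≤
      γ N ^ 2 * K * (ψ a + peakSq (γ N ^ 2) a * ψ a + peakBox (γ N ^ 2) a * ψ a) := by
    filter_upwards [ae_restrict_mem measurableSet_Ioo] with a ha
    have := mul_le_mul_of_nonneg_right (hN a ha) (hnonneg a ha)
    rw [Complex.ofReal_mul, ← mul_assoc, ← sub_mul, norm_mul, Complex.norm_real, Real.norm_eq_abs,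
      abs_of_nonneg (hnonneg a ha)]
    refine this.trans (le_of_eq ?_)
    ring
  have hI2 : IntegrableOn (fun a : ℝ =>
      (1 - Complex.exp ((lam / (1 - a) : ℝ) * expo m θ (γ N) a)) * ((ψ a : ℝ) : ℂ) -
        A N * ((peakLog (γ N ^ 2) a * ψ a : ℝ) : ℂ)) (Ioo (0 : ℝ) 1) :=
    Integrable.mono' hbd (hmeasF.aestronglyMeasurable.sub hI1.aestronglyMeasurable) hle
  have hIF : IntegrableOn (fun a : ℝ =>
      (1 - Complex.exp ((lam / (1 - a) : ℝ) * expo m θ (γ N) a)) * ((ψ a : ℝ) : ℂ))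
      (Ioo (0 : ℝ) 1) := by
    refine (hI2.add hI1).congr (Eventually.of_forall fun a => ?_)
    simp
  have hsum : IntegrableOn (fun a => ψ a + peakSq (γ N ^ 2) a * ψ a) (Ioo (0 : ℝ) 1) :=
    hint.add h2
  have hnorm := norm_integral_le_of_norm_le hbd hle
  rw [integral_sub hIF hI1, integral_const_mul, integral_complex_ofReal, integral_const_mul,
    integral_add hsum h3, integral_add hint h2, hdens] at hnorm
  rw [dist_comm, dist_eq_norm, ← mul_sub, norm_mul, Complex.norm_natCast]
  calc _ ≤ (N : ℝ) * _ := mul_le_mul_of_nonneg_left hnorm (Nat.cast_nonneg _)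
    _ = _ := by ring
end
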